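/- For every integer ω ≥ 8, there exists a graph story S = (G, ω, k, τ) such that G is a series-parallel graph and S is not realizable for any k < ⌊ω/2⌋ − 3 (while S is realizable for k = ⌊ω/2⌋ − 3). For ω = 8 this is witnessed by an 11-vertex series-parallel graph that is a parallel composition of four components — three of which are each a series of an edge with a triangle, and one of which is a path of length four — with τ given by the indices of the vertices. -/

import Mathlib

open Set

namespace GraphStories

/-- Points of the plane. -/
abbrev Pt : Type := ℝ × ℝ

/-- The vertex set of the window graph `G_i` (time `i` is 1-indexed, vertex
`v_j : Fin n` sits at position `j+1` in the ordering `τ`):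
`v_j ∈ G_i` iff `max{1, i-ω+1} ≤ j+1 ≤ i`. -/
def window (n ω i : ℕ) : Set (Fin n) := {j | j.val + 1 ≤ i ∧ i ≤ j.val + ω}

/-- All edges of `G` are visible: `|i - j| < ω` for every edge `(v_i, v_j)`. -/
def Visible (n ω : ℕ) (G : SimpleGraph (Fin n)) : Prop :=
  ∀ u v : Fin n, G.Adj u v → u.val < v.val + ω ∧ v.val < u.val + ω

/-- The data of a drawing: a position for every vertex, and a parametrized curve
for every (ordered) pair of vertices (only the data attached to the vertices and
edges of the relevant subgraph is meaningful). -/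
structure RawDrawing (n : ℕ) where
  pos : Fin n → Pt
  curve : Fin n → Fin n → ℝ → Pt

/-- `γ` (restricted to `[0,1]`) is a Jordan arc from `a` to `b`. -/
def IsArcFrom (γ : ℝ → Pt) (a b : Pt) : Prop :=
  ContinuousOn γ (Icc 0 1) ∧ InjOn γ (Icc 0 1) ∧ γ 0 = a ∧ γ 1 = b

/-- The set of points of an arc. -/
def arcBody (γ : ℝ → Pt) : Set Pt := γ '' Icc (0 : ℝ) 1

/-- The set of interior points of an arc (endpoints removed). -/
def arcInterior (γ : ℝ → Pt) : Set Pt := γ '' Ioo (0 : ℝ) 1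

/-- `D` is a planar drawing of the subgraph of `G` induced by `S`, with the
vertices mapped to (distinct) points of `P` and the edges drawn as Jordan arcs
which pairwise do not intersect except at common endpoints. -/
structure IsPlanarDrawingOn (n : ℕ) (G : SimpleGraph (Fin n)) (S : Set (Fin n))
    (P : Set Pt) (D : RawDrawing n) : Prop where
  pos_mem : ∀ v ∈ S, D.pos v ∈ P
  pos_inj : InjOn D.pos S
  curve_symm : ∀ u v : Fin n, D.curve v u = fun t => D.curve u v (1 - t)
  arc : ∀ u ∈ S, ∀ v ∈ S, G.Adj u v → IsArcFrom (D.curve u v) (D.pos u) (D.pos v)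
  vertex_off_arc : ∀ u ∈ S, ∀ v ∈ S, G.Adj u v → ∀ w ∈ S,
      D.pos w ∉ arcInterior (D.curve u v)
  no_cross : ∀ u ∈ S, ∀ v ∈ S, ∀ x ∈ S, ∀ y ∈ S, G.Adj u v → G.Adj x y →
      s(u, v) ≠ s(x, y) →
      arcInterior (D.curve u v) ∩ arcInterior (D.curve x y) = ∅

/-- `D` is a planar drawing of the subgraph of `G` induced by `S` (anywhere in
the plane). -/
def IsPlanarDrawing (n : ℕ) (G : SimpleGraph (Fin n)) (S : Set (Fin n))
    (D : RawDrawing n) : Prop :=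
  IsPlanarDrawingOn n G S univ D

/-- A realization of the graph story `(G, ω, k, τ)` on the point set `P`:
a sequence `Γ_1, …, Γ_n` of planar drawings of the window graphs `G_1, …, G_n`
on `P` (property R1) such that consecutive drawings restrict identically
(vertex positions and edge arcs) to the common subgraph `G_{i-1} ∩ G_i`
(property R2). -/
structure Realization (n ω : ℕ) (G : SimpleGraph (Fin n)) (P : Set Pt) where
  Γ : ℕ → RawDrawing n
  planar : ∀ i, 1 ≤ i → i ≤ n → IsPlanarDrawingOn n G (window n ω i) P (Γ i)
  pos_eq : ∀ i, 2 ≤ i → i ≤ n → ∀ v ∈ window n ω (i - 1) ∩ window n ω i,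
      (Γ i).pos v = (Γ (i - 1)).pos v
  curve_eq : ∀ i, 2 ≤ i → i ≤ n →
      ∀ u ∈ window n ω (i - 1) ∩ window n ω i,
      ∀ v ∈ window n ω (i - 1) ∩ window n ω i,
      G.Adj u v → (Γ i).curve u v = (Γ (i - 1)).curve u v

/-- The story `(G, ω, k, τ)` admits a realization on the point set `P`. -/
def RealizableOn (n ω : ℕ) (G : SimpleGraph (Fin n)) (P : Set Pt) : Prop :=
  Nonempty (Realization n ω G P)

/-- The story `(G, ω, k, τ)` is realizable: it admits a realization on some set
of `ω + k` points. -/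
def Realizable (n ω k : ℕ) (G : SimpleGraph (Fin n)) : Prop :=
  ∃ P : Finset Pt, P.card = ω + k ∧ RealizableOn n ω G ↑P

/-- `G` has a `K₄` minor: there are four pairwise disjoint connected branch
sets, pairwise joined by an edge of `G`. -/
def HasK4Minor {V : Type*} (G : SimpleGraph V) : Prop :=
  ∃ B : Fin 4 → Set V,
    (∀ i, (SimpleGraph.induce (B i) G).Connected) ∧
    (Pairwise fun i j => Disjoint (B i) (B j)) ∧
    ∀ i j, i ≠ j → ∃ u ∈ B i, ∃ v ∈ B j, G.Adj u v

/-- A series-parallel graph is a graph with no `K₄` minor. -/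
def SeriesParallel {V : Type*} (G : SimpleGraph V) : Prop := ¬ HasK4Minor G

/-! The story graph consists of two poles `s` and `t` with common neighbours `x_1, …, x_r`, a leaf
`y_i` at each `x_i`, and a path on the last `r` vertices. The path enters the window exactly while
the leaves leave it, and every other vertex is visible throughout.

With fewer than `ω + r - 2` points, the path has to reuse the points of three leaves. Each of these
points is joined to its `x_i` by an arc of the first drawing, which avoids the edges at `s` and `t`.
Contracting the path then gives a planar drawing of `K_{3,3}` with centres `s`, `t` and the path.
Conversely, the two ends of the path can reuse the points of two leaves in a straight-line drawing.

That `K_{3,3}` is not planar is read off from square roots of differences: for disjoint curves `e`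
and `f`, a continuous square root of `e s - f t` relates the half-angles by which `e` turns around
the ends of `f` and `f` around the ends of `e`. Multiplying these relations over the pairs of edges
of two stars with common tips shows that an invariant of the stars changes sign from one to the
other, which is impossible for three stars.

The story graph is series-parallel because each of its edges away from `s` and `t` is a bridge,
while two of the branch sets of a `K₄` minor would avoid `s` and `t` and be joined by such an edge,
which lies on a cycle through a third. -/

section Topology

theorem exists_continuous_sq_eq {X : Type*} [TopologicalSpace X] [SimplyConnectedSpace X]
    [LocallyPathConnectedSpace X] {f : X → ℂ} (hf : Continuous f) (hf₀ : ∀ x, f x ≠ 0) :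
    ∃ g : X → ℂ, Continuous g ∧ ∀ x, g x ^ 2 = f x := by
  obtain ⟨g, hg, hgf⟩ := Complex.exists_continuousOn_pow_eq (X := X) (U := univ)
    ((Homeomorph.Set.univ X).toHomotopyEquiv.simplyConnectedSpace_iff.2 ‹_›) isOpen_univ
    hf.continuousOn (by simpa using hf₀) two_ne_zero
  exact ⟨g, continuousOn_univ.1 hg, hgf⟩

open Classical in
/-- The half-angle transport of a path `f` in the punctured plane: the ratio of the values at `1`
and `0` of a continuous square root of `f`, which does not depend on the choice of the root. The
value is `0` if `f` has no continuous square root. -/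
noncomputable def sqrtTransport (f : ℝ → ℂ) : ℂ :=
  if h : ∃ g : ℝ → ℂ, Continuous g ∧ ∀ t, g t ^ 2 = f t then h.choose 1 / h.choose 0 else 0

theorem sqrtTransport_eq_div {f g : ℝ → ℂ} (hf₀ : ∀ t, f t ≠ 0) (hg : Continuous g)
    (hgf : ∀ t, g t ^ 2 = f t) : sqrtTransport f = g 1 / g 0 := by
  have hex : ∃ g : ℝ → ℂ, Continuous g ∧ ∀ t, g t ^ 2 = f t := ⟨g, hg, hgf⟩
  obtain ⟨hh, hhf⟩ := hex.choose_spec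
  have hg₀ : ∀ t, g t ≠ 0 := fun t h => hf₀ t (by rw [← hgf, h, zero_pow two_ne_zero])
  rw [sqrtTransport, dif_pos hex]
  rcases isPreconnected_univ.eq_or_eq_neg_of_sq_eq hh.continuousOn hg.continuousOn
    (fun t _ => (hhf t).trans (hgf t).symm) (fun {t} _ => hg₀ t) with h | h
  · rw [h (mem_univ _), h (mem_univ _)]
  · rw [h (mem_univ _), h (mem_univ _), Pi.neg_apply, Pi.neg_apply, neg_div_neg_eq]

theorem sqrtTransport_sq {f : ℝ → ℂ} (hf : Continuous f) (hf₀ : ∀ t, f t ≠ 0) :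
    sqrtTransport f ^ 2 = f 1 / f 0 := by
  obtain ⟨g, hg, hgf⟩ := exists_continuous_sq_eq hf hf₀
  rw [sqrtTransport_eq_div hf₀ hg hgf, div_pow, hgf, hgf]

theorem sqrtTransport_ne_zero {f : ℝ → ℂ} (hf : Continuous f) (hf₀ : ∀ t, f t ≠ 0) :
    sqrtTransport f ≠ 0 := fun h => by
  have := sqrtTransport_sq hf hf₀
  rw [h, zero_pow two_ne_zero] at this
  exact div_ne_zero (hf₀ 1) (hf₀ 0) this.symm

theorem sqrtTransport_sub_mul {e f : ℝ → ℂ} (he : Continuous e) (hf : Continuous f)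
    (hef : ∀ s t, e s ≠ f t) :
    sqrtTransport (fun s => e s - f 1) * sqrtTransport (fun t => f t - e 0) =
      sqrtTransport (fun t => f t - e 1) * sqrtTransport (fun s => e s - f 0) := by
  obtain ⟨G, hG, hGsq⟩ := exists_continuous_sq_eq (f := fun p : ℝ × ℝ => e p.1 - f p.2)
    (by fun_prop) fun p => sub_ne_zero.2 (hef _ _)
  have hG₀ : ∀ p, G p ≠ 0 := fun p h =>
    hef p.1 p.2 (sub_eq_zero.1 (by rw [← hGsq, h, zero_pow two_ne_zero]))
  have along_e : ∀ c, sqrtTransport (fun s => e s - f c) = G (1, c) / G (0, c) := fun c =>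
    sqrtTransport_eq_div (g := fun s => G (s, c)) (fun s => sub_ne_zero.2 (hef _ _))
      (by fun_prop) fun s => hGsq _
  have along_f : ∀ c, sqrtTransport (fun t => f t - e c) = G (c, 1) / G (c, 0) := fun c => by
    rw [sqrtTransport_eq_div (g := fun t => Complex.I * G (c, t))
      (fun t => sub_ne_zero.2 (hef _ _).symm) (by fun_prop) fun t => by
        rw [mul_pow, Complex.I_sq, hGsq]; ring, mul_div_mul_left _ _ Complex.I_ne_zero]
  rw [along_e, along_e, along_f, along_f]
  field_simp [hG₀]

end Topology

section K33

theorem prod_offDiag_fst {ι M : Type*} [Fintype ι] [CommMonoid M] (f : ι → M) :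
    ∏ p ∈ (Finset.univ : Finset ι).offDiag, f p.1 = ∏ j, f j ^ (Fintype.card ι - 1) := by
  classical
  rw [Finset.prod_finset_product _ Finset.univ (fun j => Finset.univ.erase j)
    (by simp [eq_comm])]
  simp only [Finset.prod_const, Finset.card_erase_of_mem (Finset.mem_univ _), Finset.card_univ]

theorem prod_offDiag_swap {ι M : Type*} [Fintype ι] [CommMonoid M] (f : ι → ι → M) :
    ∏ p ∈ (Finset.univ : Finset ι).offDiag, f p.2 p.1 =
      ∏ p ∈ (Finset.univ : Finset ι).offDiag, f p.1 p.2 :=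
  Finset.prod_equiv (Equiv.prodComm ι ι) (by simp [eq_comm]) (by simp)

/-- The family `e` of plane curves is a star with centre `a` and tips `b`: the curve `e j` leads
from `a` to `b j`. -/
structure IsStar {ι : Type*} (a : ℂ) (b : ι → ℂ) (e : ι → ℝ → ℂ) : Prop where
  continuous : ∀ j, Continuous (e j)
  apply_zero : ∀ j, e j 0 = a
  apply_one : ∀ j, e j 1 = b j

/-- An invariant of a star with three tips that avoids them except at the ends of its curves. It
multiplies the half-angle transports of the curves around the tips on the other curves. -/
noncomputable def turningSign (a : ℂ) (b : Fin 3 → ℂ) (e : Fin 3 → ℝ → ℂ) : ℂ :=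
  (∏ p ∈ (Finset.univ : Finset (Fin 3)).offDiag, sqrtTransport fun t => e p.1 t - b p.2) *
    ∏ j, (b j - a)

variable {a a' : ℂ} {b : Fin 3 → ℂ} {e f : Fin 3 → ℝ → ℂ}

theorem IsStar.apply_ne_centre {ι : Type*} [Nontrivial ι] {a' : ℂ} {b : ι → ℂ}
    {e f : ι → ℝ → ℂ} (hf : IsStar a' b f) (hef : ∀ j l, j ≠ l → ∀ s t, e j s ≠ f l t) (j : ι)
    (t : ℝ) : e j t ≠ a' := by
  obtain ⟨l, hlj⟩ := exists_ne j
  exact hf.apply_zero l ▸ hef j l hlj.symm t 0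

theorem IsStar.prod_sqrtTransport_sub_centre (hf : IsStar a' b f) (ha : ∀ j t, f j t ≠ a) :
    ∏ p ∈ (Finset.univ : Finset (Fin 3)).offDiag, sqrtTransport (fun t => f p.1 t - a) =
      (∏ j, (b j - a)) / (a' - a) ^ 3 := by
  have sq_eq (j : Fin 3) : sqrtTransport (fun t => f j t - a) ^ 2 = (b j - a) / (a' - a) := by
    rw [sqrtTransport_sq (by have := hf.continuous j; fun_prop)
      fun t => sub_ne_zero.2 (ha j t), hf.apply_zero, hf.apply_one]
  rw [prod_offDiag_fst fun j => sqrtTransport fun t => f j t - a]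
  simp only [Fintype.card_fin, Nat.add_one_sub_one, sq_eq, Finset.prod_div_distrib,
    Finset.prod_const, Finset.card_univ]

theorem turningSign_eq_neg (he : IsStar a b e) (hf : IsStar a' b f)
    (hef : ∀ j l, j ≠ l → ∀ s t, e j s ≠ f l t) :
    turningSign a b e = -turningSign a' b f := by
  have hfe : ∀ j l, j ≠ l → ∀ s t, f j s ≠ e l t := fun j l hjl s t => (hef l j hjl.symm t s).symm
  have product_relation :
      (∏ p ∈ (Finset.univ : Finset (Fin 3)).offDiag, sqrtTransport fun t => e p.1 t - b p.2) *
        ((∏ j, (b j - a)) / (a' - a) ^ 3) =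
      (∏ p ∈ (Finset.univ : Finset (Fin 3)).offDiag, sqrtTransport fun t => f p.1 t - b p.2) *
        ((∏ j, (b j - a')) / (a - a') ^ 3) := by
    rw [← hf.prod_sqrtTransport_sub_centre (a := a) (he.apply_ne_centre hfe),
      ← he.prod_sqrtTransport_sub_centre (a := a') (hf.apply_ne_centre hef),
      ← prod_offDiag_swap fun j _ => sqrtTransport fun t => f j t - a,
      ← prod_offDiag_swap fun j l => sqrtTransport fun t => f j t - b l,
      ← Finset.prod_mul_distrib, ← Finset.prod_mul_distrib]
    refine Finset.prod_congr rfl fun p hp => ?_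
    simpa only [he.apply_zero, he.apply_one, hf.apply_zero, hf.apply_one] using
      sqrtTransport_sub_mul (he.continuous p.1) (hf.continuous p.2)
        (hef _ _ (Finset.mem_offDiag.1 hp).2.2)
  have haa' : a' - a ≠ 0 :=
    sub_ne_zero.2 (hf.apply_zero 0 ▸ he.apply_ne_centre hfe 0 0)
  rw [← neg_sub a', Odd.neg_pow (by decide), div_neg, mul_neg, ← mul_div_assoc,
    ← mul_div_assoc, ← neg_div, div_left_inj' (pow_ne_zero 3 haa')] at product_relation
  exact product_relation

theorem turningSign_ne_zero (he : IsStar a b e) (hf : IsStar a' b f)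
    (hef : ∀ j l, j ≠ l → ∀ s t, e j s ≠ f l t) : turningSign a b e ≠ 0 := by
  have off_tip {j l : Fin 3} (hjl : j ≠ l) (t : ℝ) : e j t - b l ≠ 0 :=
    sub_ne_zero.2 (hf.apply_one l ▸ hef j l hjl t 1)
  refine mul_ne_zero (Finset.prod_ne_zero_iff.2 fun p hp => ?_)
    (Finset.prod_ne_zero_iff.2 fun l _ => ?_)
  · exact sqrtTransport_ne_zero ((he.continuous _).sub continuous_const)
      (off_tip (Finset.mem_offDiag.1 hp).2.2)
  · obtain ⟨j, hjl⟩ := exists_ne l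
    rw [← neg_sub, ← he.apply_zero j]
    exact neg_ne_zero.2 (off_tip hjl 0)

theorem exists_eq_of_isStar {a b : Fin 3 → ℂ} {γ : Fin 3 → Fin 3 → ℝ → ℂ}
    (hγ : ∀ i, IsStar (a i) b (γ i)) :
    ∃ i j k l, i ≠ k ∧ j ≠ l ∧ ∃ s t, γ i j s = γ k l t := by
  by_contra! hdisj
  have hneg {i k : Fin 3} (hik : i ≠ k) :=
    turningSign_eq_neg (hγ i) (hγ k) fun j l => hdisj i j k l hik
  refine turningSign_ne_zero (hγ 0) (hγ 1) (fun j l => hdisj 0 j 1 l (by decide))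
    (self_eq_neg.1 ?_)
  calc turningSign (a 0) b (γ 0) = -turningSign (a 1) b (γ 1) := hneg (by decide)
    _ = turningSign (a 2) b (γ 2) := by rw [hneg (show (1 : Fin 3) ≠ 2 by decide), neg_neg]
    _ = -turningSign (a 0) b (γ 0) := hneg (by decide)

theorem exists_not_disjoint_of_joinedIn {a b : Fin 3 → ℝ × ℝ} {E : Fin 3 → Fin 3 → Set (ℝ × ℝ)}
    (hE : ∀ i j, JoinedIn (E i j) (a i) (b j)) :
    ∃ i j k l, i ≠ k ∧ j ≠ l ∧ ¬ Disjoint (E i j) (E k l) := by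
  let φ := Complex.equivRealProdCLM.symm
  have extend_mem (i j t) : (hE i j).somePath.extend t ∈ E i j := by
    obtain ⟨u, hu⟩ : (hE i j).somePath.extend t ∈ range (hE i j).somePath :=
      Path.extend_range (hE i j).somePath ▸ mem_range_self t
    exact hu ▸ (hE i j).somePath_mem u
  obtain ⟨i, j, k, l, hik, hjl, s, t, h⟩ := exists_eq_of_isStar (a := φ ∘ a) (b := φ ∘ b)
    (γ := fun i j t => φ ((hE i j).somePath.extend t))
    fun i => ⟨fun j => φ.continuous.comp (by fun_prop), by simp, by simp⟩
  exact ⟨i, j, k, l, hik, hjl, not_disjoint_iff.2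
    ⟨_, extend_mem i j s, φ.injective h ▸ extend_mem k l t⟩⟩

end K33

section K4Minor

variable {V : Type*} {G : SimpleGraph V}

theorem reachable_deleteEdges_of_preconnected_induce {A : Set V} {a a' v : V} {e : Sym2 V}
    (hA : (G.induce A).Preconnected) (ha : a ∈ A) (ha' : a' ∈ A) (hve : v ∈ e) (hv : v ∉ A) :
    (G.deleteEdges {e}).Reachable a a' := by
  let inclusion : G.induce A →g G.deleteEdges {e} := ⟨Subtype.val, fun {x y} hxy => by
    refine SimpleGraph.deleteEdges_adj.2 ⟨hxy, fun hxye => ?_⟩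
    rw [mem_singleton_iff] at hxye
    rcases Sym2.mem_iff.1 (hxye ▸ hve) with rfl | rfl
    exacts [hv x.2, hv y.2]⟩
  exact (hA ⟨a, ha⟩ ⟨a', ha'⟩).map inclusion

theorem not_isBridge_of_pairwise_adj {A B C : Set V} (hA : (G.induce A).Preconnected)
    (hB : (G.induce B).Preconnected) (hC : (G.induce C).Preconnected) (hAB : Disjoint A B)
    (hAC : Disjoint A C) (hBC : Disjoint B C) (hadjAC : ∃ a ∈ A, ∃ c ∈ C, G.Adj a c)
    (hadjBC : ∃ b ∈ B, ∃ c ∈ C, G.Adj b c) {u v : V} (hu : u ∈ A) (hv : v ∈ B) :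
    ¬ G.IsBridge s(u, v) := by
  obtain ⟨a, ha, c, hc, hac⟩ := hadjAC
  obtain ⟨b, hb, c', hc', hbc'⟩ := hadjBC
  have huB := disjoint_left.1 hAB hu
  have huC := disjoint_left.1 hAC hu
  have hvA := disjoint_right.1 hAB hv
  have hvC := disjoint_left.1 hBC hv
  have adj_of_mem {x z : V} (hxz : G.Adj x z) (hz : z ∈ C) :
      (G.deleteEdges {s(u, v)}).Adj x z := by
    refine SimpleGraph.deleteEdges_adj.2 ⟨hxz, fun h => ?_⟩
    rcases Sym2.mem_iff.1 (mem_singleton_iff.1 h ▸ Sym2.mem_mk_right x z) with rfl | rfl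
    exacts [huC hz, hvC hz]
  rw [SimpleGraph.isBridge_iff, not_not]
  have along_A : (G.deleteEdges {s(u, v)}).Reachable u a :=
    reachable_deleteEdges_of_preconnected_induce hA hu ha (Sym2.mem_mk_right u v) hvA
  have along_C : (G.deleteEdges {s(u, v)}).Reachable c c' :=
    reachable_deleteEdges_of_preconnected_induce hC hc hc' (Sym2.mem_mk_left u v) huC
  have along_B : (G.deleteEdges {s(u, v)}).Reachable b v :=
    reachable_deleteEdges_of_preconnected_induce hB hb hv (Sym2.mem_mk_left u v) huB
  exact ((along_A.trans (adj_of_mem hac hc).reachable).trans along_C).trans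
    ((adj_of_mem hbc' hc').reachable.symm.trans along_B)

theorem exists_pair_notMem_of_pairwise_disjoint {B : Fin 4 → Set V}
    (hB : Pairwise fun i j => Disjoint (B i) (B j)) (s t : V) :
    ∃ i j, i ≠ j ∧ s ∉ B i ∧ t ∉ B i ∧ s ∉ B j ∧ t ∉ B j := by
  classical
  have card_le_one (w : V) : (Finset.univ.filter fun i => w ∈ B i).card ≤ 1 :=
    Finset.card_le_one.2 fun i hi j hj => by
      by_contra hij
      exact disjoint_left.1 (hB hij) (Finset.mem_filter.1 hi).2 (Finset.mem_filter.1 hj).2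
  have one_lt_card : 1 < (Finset.univ.filter fun i => s ∈ B i ∨ t ∈ B i)ᶜ.card := by
    have := Finset.card_union_le (Finset.univ.filter fun i => s ∈ B i)
      (Finset.univ.filter fun i => t ∈ B i)
    rw [← Finset.filter_or] at this
    have := card_le_one s
    have := card_le_one t
    rw [Finset.card_compl, Fintype.card_fin]
    lia
  obtain ⟨i, hi, j, hj, hij⟩ := Finset.one_lt_card.1 one_lt_card
  simp only [Finset.mem_compl, Finset.mem_filter_univ, not_or] at hi hj
  exact ⟨i, j, hij, hi.1, hi.2, hj.1, hj.2⟩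

theorem seriesParallel_of_isBridge (s t : V)
    (hbridge : ∀ u v, G.Adj u v → u ≠ s → u ≠ t → v ≠ s → v ≠ t → G.IsBridge s(u, v)) :
    SeriesParallel G := by
  rintro ⟨B, hconn, hdisj, hadj⟩
  obtain ⟨i, j, hij, hsi, hti, hsj, htj⟩ := exists_pair_notMem_of_pairwise_disjoint hdisj s t
  obtain ⟨k, hki, hkj⟩ := (by decide : ∀ i j : Fin 4, ∃ k, k ≠ i ∧ k ≠ j) i j
  obtain ⟨u, hu, v, hv, huv⟩ := hadj i j hij
  exact not_isBridge_of_pairwise_adj (hconn i).preconnected (hconn j).preconnected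
    (hconn k).preconnected (hdisj hij) (hdisj hki.symm) (hdisj hkj.symm) (hadj i k hki.symm)
    (hadj j k hkj.symm) hu hv
    (hbridge u v huv (ne_of_mem_of_not_mem hu hsi) (ne_of_mem_of_not_mem hu hti)
      (ne_of_mem_of_not_mem hv hsj) (ne_of_mem_of_not_mem hv htj))

theorem isBridge_of_forall_adj {u v : V} (A : Set V) (hu : u ∈ A) (hv : v ∉ A)
    (hA : ∀ x ∈ A, ∀ y ∉ A, G.Adj x y → x = u ∧ y = v) : G.IsBridge s(u, v) := by
  rw [SimpleGraph.isBridge_iff]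
  rintro ⟨p⟩
  obtain ⟨d, -, hfst, hsnd⟩ := p.exists_boundary_dart A hu hv
  have hd := SimpleGraph.deleteEdges_adj.1 d.adj
  obtain ⟨hdu, hdv⟩ := hA _ hfst _ hsnd hd.1
  exact hd.2 (by rw [hdu, hdv, mem_singleton_iff])

end K4Minor

section StoryGraph

/-- The edges of `storyGraph r ω`, directed upwards. On indices, the vertices are the leaves
`y_i = i` for `i < r`, the two poles `s = r` and `t = r + 1`, their common neighbours
`x_i = r + 2 + i` for `i < r`, isolated vertices filling up the first window, and the path
`a_j = ω + j` for `j < r`. The edges are `s x_i`, `t x_i`, `y_i x_i` and `a_j a_{j+1}`. -/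
def Arc (r ω u v : ℕ) : Prop :=
  ((u = r ∨ u = r + 1) ∧ r + 2 ≤ v ∧ v < 2 * r + 2) ∨ (u < r ∧ v = u + r + 2) ∨
    (ω ≤ u ∧ v = u + 1)

/-- The graph of the story: a complete bipartite graph `K_{2,r}` with a leaf attached to each of
the `r` common neighbours, isolated vertices, and a path on the last `r` vertices. The path
enters the window exactly while the leaves leave it. -/
def storyGraph (r ω : ℕ) : SimpleGraph (Fin (ω + r)) where
  Adj u v := Arc r ω u v ∨ Arc r ω v u
  symm := ⟨fun _ _ => Or.symm⟩
  loopless := ⟨fun u h => by unfold Arc at h; lia⟩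

variable {r ω : ℕ}

theorem visible_storyGraph (hω : 2 * r + 2 ≤ ω) : Visible (ω + r) ω (storyGraph r ω) := by
  rintro u v (h | h) <;> unfold Arc at h <;> lia

theorem isBridge_storyGraph (hω : 2 * r + 2 ≤ ω) {u v : Fin (ω + r)} (huv : Arc r ω u v)
    (hu : u.val ≠ r ∧ u.val ≠ r + 1) : (storyGraph r ω).IsBridge s(u, v) := by
  rcases huv with h | ⟨hur, hvu⟩ | ⟨hωu, hvu⟩
  · lia
  · refine isBridge_of_forall_adj {u} rfl (by simp [Fin.ext_iff]; lia) ?_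
    rintro x rfl y - (h | h) <;> unfold Arc at h <;> exact ⟨rfl, Fin.ext (by lia)⟩
  · refine isBridge_of_forall_adj {w | ω ≤ w.val ∧ w.val ≤ u.val} ⟨hωu, le_rfl⟩ (by simp; lia) ?_
    rintro x ⟨hx, hxu⟩ y hy (h | h) <;> unfold Arc at h <;> simp only [mem_ofPred_eq] at hy <;>
      exact ⟨Fin.ext (by lia), Fin.ext (by lia)⟩

theorem seriesParallel_storyGraph (hr : 2 ≤ r) (hω : 2 * r + 2 ≤ ω) :
    SeriesParallel (storyGraph r ω) := by
  refine seriesParallel_of_isBridge ⟨r, by lia⟩ ⟨r + 1, by lia⟩ fun u v huv hus hut hvs hvt => ?_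
  simp only [ne_eq, Fin.ext_iff] at hus hut hvs hvt
  rcases huv with h | h
  · exact isBridge_storyGraph hω h ⟨hus, hut⟩
  · exact Sym2.eq_swap ▸ isBridge_storyGraph hω h ⟨hvs, hvt⟩

end StoryGraph

section Drawings

variable {n ω : ℕ} {G : SimpleGraph (Fin n)} {S S₀ S₁ C : Set (Fin n)} {P P₀ P₁ : Set Pt}
  {D D₀ D₁ : RawDrawing n} {u v x y : Fin n}

theorem IsArcFrom.arcBody_eq {γ : ℝ → Pt} {p q : Pt} (h : IsArcFrom γ p q) :
    arcBody γ = arcInterior γ ∪ {p, q} := by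
  rw [arcBody, arcInterior, ← Ioo_union_both zero_le_one, image_union, image_pair, h.2.2.1, h.2.2.2]

theorem IsArcFrom.joinedIn {γ : ℝ → Pt} {p q : Pt} (h : IsArcFrom γ p q) :
    JoinedIn (arcBody γ) p q :=
  JoinedIn.ofLine h.1 h.2.2.1 h.2.2.2 subset_rfl

theorem IsPlanarDrawingOn.disjoint_arcBody (hD : IsPlanarDrawingOn n G S P D) (hu : u ∈ S)
    (hv : v ∈ S) (hx : x ∈ S) (hy : y ∈ S) (huv : G.Adj u v) (hxy : G.Adj x y)
    (hux : u ≠ x) (huy : u ≠ y) (hvx : v ≠ x) (hvy : v ≠ y) :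
    Disjoint (arcBody (D.curve u v)) (arcBody (D.curve x y)) := by
  have hne : s(u, v) ≠ s(x, y) := fun h => by
    rcases Sym2.eq_iff.1 h with h | h
    exacts [hux h.1, huy h.1]
  rw [(hD.arc u hu v hv huv).arcBody_eq, (hD.arc x hx y hy hxy).arcBody_eq]
  simp only [disjoint_union_left, disjoint_union_right, disjoint_insert_left,
    disjoint_insert_right, disjoint_singleton_left, disjoint_singleton_right,
    mem_union, mem_insert_iff, mem_singleton_iff, not_or]
  exact ⟨⟨disjoint_iff_inter_eq_empty.2 (hD.no_cross u hu v hv x hx y hy huv hxy hne),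
      hD.vertex_off_arc x hx y hy hxy u hu, hD.vertex_off_arc x hx y hy hxy v hv⟩,
    ⟨hD.vertex_off_arc u hu v hv huv x hx, hD.pos_inj.ne hx hu hux.symm,
      hD.pos_inj.ne hx hv hvx.symm⟩,
    hD.vertex_off_arc u hu v hv huv y hy, hD.pos_inj.ne hy hu huy.symm,
    hD.pos_inj.ne hy hv hvy.symm⟩

/-- The part of the plane covered by the drawing `D` of the subgraph of `G` induced by `C`. -/
def drawnSet (G : SimpleGraph (Fin n)) (D : RawDrawing n) (C : Set (Fin n)) : Set Pt :=
  D.pos '' C ∪ ⋃ (u ∈ C) (v ∈ C) (_ : G.Adj u v), arcBody (D.curve u v)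

theorem IsPlanarDrawingOn.joinedIn_drawnSet (hD : IsPlanarDrawingOn n G S P D) (hCS : C ⊆ S)
    (hC : (G.induce C).Preconnected) (hu : u ∈ C) (hv : v ∈ C) :
    JoinedIn (drawnSet G D C) (D.pos u) (D.pos v) := by
  obtain ⟨p⟩ := hC ⟨u, hu⟩ ⟨v, hv⟩
  suffices ∀ {a b : C}, (G.induce C).Walk a b →
      JoinedIn (drawnSet G D C) (D.pos a) (D.pos b) from this p
  intro a b p
  induction p with
  | nil => exact JoinedIn.refl (Or.inl (mem_image_of_mem _ (Subtype.coe_prop _)))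
  | @cons a b _ hab _ ih =>
    refine JoinedIn.trans ?_ ih
    refine (hD.arc a (hCS a.2) b (hCS b.2) hab).joinedIn.mono (subset_union_of_subset_right ?_ _)
    exact subset_iUnion₂_of_subset a.1 a.2 (subset_iUnion₂_of_subset b.1 b.2
      (subset_iUnion_of_subset hab subset_rfl))

theorem IsPlanarDrawingOn.disjoint_drawnSet_arcBody (hD : IsPlanarDrawingOn n G S P D)
    (hCS : C ⊆ S) (hx : x ∈ S) (hy : y ∈ S) (hxy : G.Adj x y) (hxC : x ∉ C) (hyC : y ∉ C) :
    Disjoint (drawnSet G D C) (arcBody (D.curve x y)) := by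
  simp only [drawnSet, disjoint_union_left, disjoint_iUnion_left]
  refine ⟨?_, fun u hu v hv huv => hD.disjoint_arcBody (hCS hu) (hCS hv) hx hy huv hxy
    (ne_of_mem_of_not_mem hu hxC) (ne_of_mem_of_not_mem hu hyC) (ne_of_mem_of_not_mem hv hxC)
    (ne_of_mem_of_not_mem hv hyC)⟩
  rw [disjoint_left, (hD.arc x hx y hy hxy).arcBody_eq]
  rintro _ ⟨w, hw, rfl⟩ (h | h | h)
  · exact hD.vertex_off_arc x hx y hy hxy w (hCS hw) h
  · exact hxC (hD.pos_inj (hCS hw) hx h ▸ hw)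
  · exact hyC (hD.pos_inj (hCS hw) hy h ▸ hw)

/-- The drawings `D₀` and `D₁` have the same restriction to the subgraph of `G` induced by `S`. -/
structure AgreeOn (G : SimpleGraph (Fin n)) (S : Set (Fin n)) (D₀ D₁ : RawDrawing n) : Prop where
  pos_eq : ∀ v ∈ S, D₀.pos v = D₁.pos v
  curve_eq : ∀ u ∈ S, ∀ v ∈ S, G.Adj u v → D₀.curve u v = D₁.curve u v

theorem Realization.agreeOn (R : Realization n ω G P) {i j : ℕ} (hi : 1 ≤ i) (hij : i ≤ j)
    (hj : j ≤ n) : AgreeOn G (window n ω i ∩ window n ω j) (R.Γ i) (R.Γ j) := by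
  induction j, hij using Nat.le_induction with
  | base => exact ⟨fun _ _ => rfl, fun _ _ _ _ _ => rfl⟩
  | succ j hij ih =>
    have mem_window {v : Fin n} (hv : v ∈ window n ω i ∩ window n ω (j + 1)) :
        v ∈ window n ω j := by
      obtain ⟨⟨hvi, -⟩, -, hvj⟩ := hv
      exact ⟨by lia, by lia⟩
    have agree := ih (by lia)
    exact ⟨fun v hv => (agree.pos_eq v ⟨hv.1, mem_window hv⟩).trans
        (R.pos_eq (j + 1) (by lia) hj v ⟨mem_window hv, hv.2⟩).symm,
      fun u hu v hv huv =>
        (agree.curve_eq u ⟨hu.1, mem_window hu⟩ v ⟨hv.1, mem_window hv⟩ huv).trans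
          (R.curve_eq (j + 1) (by lia) hj u ⟨mem_window hu, hu.2⟩ v ⟨mem_window hv, hv.2⟩
            huv).symm⟩

theorem AgreeOn.notMem_of_pos_eq (hD : AgreeOn G (S₀ ∩ S₁) D₀ D₁)
    (h₁ : IsPlanarDrawingOn n G S₁ P D₁) (hv : v ∈ S₀) (hx : x ∈ S₁ \ S₀)
    (hvx : D₀.pos v = D₁.pos x) : v ∉ S₁ := fun hv₁ =>
  hx.2 (h₁.pos_inj hv₁ hx.1 ((hD.pos_eq v ⟨hv, hv₁⟩).symm.trans hvx) ▸ hv)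

theorem AgreeOn.disjoint_drawnSet_union_arcBody (hD : AgreeOn G (S₀ ∩ S₁) D₀ D₁)
    (h₀ : IsPlanarDrawingOn n G S₀ P₀ D₀) (h₁ : IsPlanarDrawingOn n G S₁ P₁ D₁)
    (hC : C ⊆ S₁ \ S₀) (hu : u ∈ S₀ ∩ S₁) (hv : v ∈ S₀ ∩ S₁) (hx : x ∈ S₀ ∩ S₁)
    (hy : y ∈ S₀ \ S₁) (huv : G.Adj u v) (hyx : G.Adj y x) (hxu : x ≠ u) (hxv : x ≠ v) :
    Disjoint (drawnSet G D₁ C ∪ arcBody (D₀.curve y x)) (arcBody (D₁.curve u v)) := by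
  refine disjoint_union_left.2 ⟨h₁.disjoint_drawnSet_arcBody (hC.trans sdiff_subset) hu.2 hv.2 huv
    (fun h => (hC h).2 hu.1) (fun h => (hC h).2 hv.1), ?_⟩
  rw [← hD.curve_eq u hu v hv huv]
  exact h₀.disjoint_arcBody hy.1 hx.1 hu.1 hv.1 hyx huv (ne_of_mem_of_not_mem hu.2 hy.2).symm
    (ne_of_mem_of_not_mem hv.2 hy.2).symm hxu hxv

/-- Otherwise `s`, `t` and the drawing of `C` would be the centres of three disjoint stars with the
tips `x q`: the last one reaches `x q` through the point once occupied by the leaf `y q`. -/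
theorem AgreeOn.exists_pos_notMem_image (hD : AgreeOn G (S₀ ∩ S₁) D₀ D₁)
    (h₀ : IsPlanarDrawingOn n G S₀ P₀ D₀) (h₁ : IsPlanarDrawingOn n G S₁ P₁ D₁)
    {s t : Fin n} {x y : Fin 3 → Fin n} (hst : s ≠ t) (hs : s ∈ S₀ ∩ S₁) (ht : t ∈ S₀ ∩ S₁)
    (hx_inj : Function.Injective x) (hx : ∀ q, x q ∈ S₀ ∩ S₁) (hy : ∀ q, y q ∈ S₀ \ S₁)
    (hsx : ∀ q, G.Adj s (x q)) (htx : ∀ q, G.Adj t (x q)) (hyx : ∀ q, G.Adj (y q) (x q))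
    (hCS : C ⊆ S₁ \ S₀) (hC : (G.induce C).Preconnected) :
    ∃ q, D₀.pos (y q) ∉ D₁.pos '' C := by
  by_contra! hcoin
  choose c hc hcy using hcoin
  let E : Fin 3 → Fin 3 → Set Pt := ![fun q => arcBody (D₁.curve s (x q)),
    fun q => arcBody (D₁.curve t (x q)), fun q => drawnSet G D₁ C ∪ arcBody (D₀.curve (y q) (x q))]
  have joined_two (q) : JoinedIn (E 2 q) (D₁.pos (c 0)) (D₁.pos (x q)) := by
    refine ((h₁.joinedIn_drawnSet (hCS.trans sdiff_subset) hC (hc 0) (hc q)).mono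
      subset_union_left).trans ?_
    rw [hcy, ← hD.pos_eq _ (hx q)]
    exact (h₀.arc _ (hy q).1 _ (hx q).1 (hyx q)).joinedIn.mono subset_union_right
  have disjoint_zero_one {j l} (hjl : j ≠ l) : Disjoint (E 0 j) (E 1 l) :=
    h₁.disjoint_arcBody hs.2 (hx j).2 ht.2 (hx l).2 (hsx j) (htx l) hst (hsx l).ne (htx j).ne.symm
      (hx_inj.ne hjl)
  have disjoint_two_zero {j l} (hjl : j ≠ l) : Disjoint (E 2 j) (E 0 l) :=
    hD.disjoint_drawnSet_union_arcBody h₀ h₁ hCS hs (hx l) (hx j) (hy j) (hsx l) (hyx j)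
      (hsx j).ne.symm (hx_inj.ne hjl)
  have disjoint_two_one {j l} (hjl : j ≠ l) : Disjoint (E 2 j) (E 1 l) :=
    hD.disjoint_drawnSet_union_arcBody h₀ h₁ hCS ht (hx l) (hx j) (hy j) (htx l) (hyx j)
      (htx j).ne.symm (hx_inj.ne hjl)
  obtain ⟨i, j, k, l, hik, hjl, hE⟩ := exists_not_disjoint_of_joinedIn
    (a := ![D₁.pos s, D₁.pos t, D₁.pos (c 0)]) (b := fun q => D₁.pos (x q)) (E := E)
    (Fin.forall_fin_succ.2 ⟨fun q => (h₁.arc s hs.2 _ (hx q).2 (hsx q)).joinedIn,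
      Fin.forall_fin_two.2 ⟨fun q => (h₁.arc t ht.2 _ (hx q).2 (htx q)).joinedIn, joined_two⟩⟩)
  fin_cases i <;> fin_cases k
  exacts [hik rfl, hE (disjoint_zero_one hjl), hE (disjoint_two_zero hjl.symm).symm,
    hE (disjoint_zero_one hjl.symm).symm, hik rfl, hE (disjoint_two_one hjl.symm).symm,
    hE (disjoint_two_zero hjl), hE (disjoint_two_one hjl), hik rfl]

end Drawings

section LowerBound

theorem exists_injective_eq_of_card_add_le {α β γ : Type*} [Fintype α] [Fintype β]
    {f : α → γ} {g : β → γ} (hf : Function.Injective f) (hg : Function.Injective g)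
    {P : Finset γ} (hfP : ∀ a, f a ∈ P) (hgP : ∀ b, g b ∈ P) {m : ℕ}
    (hm : P.card + m ≤ Fintype.card α + Fintype.card β) :
    ∃ (u : Fin m → α) (w : Fin m → β), Function.Injective u ∧ ∀ q, f (u q) = g (w q) := by
  classical
  let F := Finset.univ.image f
  let H := Finset.univ.image g
  have card_inter : m ≤ (F ∩ H).card := by
    have hF : F.card = Fintype.card α := Finset.card_image_of_injective _ hf
    have hH : H.card = Fintype.card β := Finset.card_image_of_injective _ hg
    have hunion : (F ∪ H).card ≤ P.card := Finset.card_le_card (Finset.union_subset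
      (Finset.image_subset_iff.2 fun a _ => hfP a) (Finset.image_subset_iff.2 fun b _ => hgP b))
    have := Finset.card_union_add_card_inter F H
    lia
  obtain ⟨p⟩ : Nonempty (Fin m ↪ ↥(F ∩ H)) :=
    Function.Embedding.nonempty_of_card_le (by simpa using card_inter)
  have hp (q : Fin m) : ∃ a b, f a = p q ∧ g b = p q := by
    obtain ⟨hF, hH⟩ := Finset.mem_inter.1 (p q).2
    obtain ⟨a, -, ha⟩ := Finset.mem_image.1 hF
    obtain ⟨b, -, hb⟩ := Finset.mem_image.1 hH
    exact ⟨a, b, ha, hb⟩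
  choose u w hu hw using hp
  refine ⟨u, w, fun q q' h => p.injective (Subtype.ext ?_), fun q => (hu q).trans (hw q).symm⟩
  rw [← hu, ← hu, h]

variable {r ω k : ℕ}

theorem preconnected_induce_path_storyGraph :
    ((storyGraph r ω).induce {v | ω ≤ v.val}).Preconnected := by
  let path : SimpleGraph.pathGraph r →g (storyGraph r ω).induce {v | ω ≤ v.val} :=
    ⟨fun j => ⟨Fin.natAdd ω j, by simp⟩, fun {i j} hij => by
      rcases SimpleGraph.pathGraph_adj.1 hij with h | h
      exacts [Or.inl (Or.inr (Or.inr ⟨by simp, by simp; lia⟩)),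
        Or.inr (Or.inr (Or.inr ⟨by simp, by simp; lia⟩))]⟩
  refine (SimpleGraph.pathGraph_preconnected r).map path fun ⟨v, hv⟩ => ?_
  simp only [mem_ofPred_eq] at hv
  exact ⟨⟨v - ω, by lia⟩, Subtype.ext (Fin.ext (by simp [path]; lia))⟩

theorem mem_window_self_iff {v : Fin (ω + r)} : v ∈ window (ω + r) ω ω ↔ v.val < ω := by
  simp only [window, mem_ofPred_eq]; lia

theorem mem_window_last_iff {v : Fin (ω + r)} : v ∈ window (ω + r) ω (ω + r) ↔ r ≤ v.val := by
  simp only [window, mem_ofPred_eq]; lia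

theorem castAdd_mem_window (i : Fin ω) : Fin.castAdd r i ∈ window (ω + r) ω ω :=
  mem_window_self_iff.2 i.2

theorem natAdd_mem_window (hrω : r ≤ ω) (j : Fin r) :
    Fin.natAdd ω j ∈ window (ω + r) ω (ω + r) \ window (ω + r) ω ω :=
  ⟨mem_window_last_iff.2 (by simp; lia), fun h => by simpa using mem_window_self_iff.1 h⟩

theorem exists_injective_pos_eq {G : SimpleGraph (Fin (ω + r))} {P : Finset Pt} {D₀ D₁ m}
    (hrω : r ≤ ω) (h₀ : IsPlanarDrawingOn (ω + r) G (window (ω + r) ω ω) P D₀)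
    (h₁ : IsPlanarDrawingOn (ω + r) G (window (ω + r) ω (ω + r)) P D₁)
    (hm : P.card + m ≤ ω + r) :
    ∃ (u : Fin m → Fin ω) (w : Fin m → Fin r), Function.Injective u ∧
      ∀ q, D₀.pos (Fin.castAdd r (u q)) = D₁.pos (Fin.natAdd ω (w q)) :=
  exists_injective_eq_of_card_add_le
    (f := fun i : Fin ω => D₀.pos (Fin.castAdd r i))
    (g := fun j : Fin r => D₁.pos (Fin.natAdd ω j))
    (fun i j h => Fin.castAdd_injective ω r
      (h₀.pos_inj (castAdd_mem_window i) (castAdd_mem_window j) h))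
    (fun i j h => Fin.natAdd_injective r ω
      (h₁.pos_inj (natAdd_mem_window hrω i).1 (natAdd_mem_window hrω j).1 h))
    (fun i => h₀.pos_mem _ (castAdd_mem_window i))
    (fun j => h₁.pos_mem _ (natAdd_mem_window hrω j).1) (by simpa only [Fintype.card_fin])

theorem le_add_two_of_realizable_storyGraph (hω : 2 * r + 2 ≤ ω)
    (h : Realizable (ω + r) ω k (storyGraph r ω)) : r ≤ k + 2 := by
  by_contra! hk
  obtain ⟨P, hP, ⟨R⟩⟩ := h
  have planar_first := R.planar ω (by lia) (by lia)
  have planar_last := R.planar (ω + r) (by lia) le_rfl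
  have agree := R.agreeOn (i := ω) (j := ω + r) (by lia) (by lia) le_rfl
  have mem_both {v : Fin (ω + r)} (hv : r ≤ v.val) (hvω : v.val < ω) :
      v ∈ window (ω + r) ω ω ∩ window (ω + r) ω (ω + r) :=
    ⟨mem_window_self_iff.2 hvω, mem_window_last_iff.2 hv⟩
  obtain ⟨u, w, hu, huw⟩ :=
    exists_injective_pos_eq (m := 3) (by lia) planar_first planar_last (by lia)
  have u_lt (q) : (u q).val < r := by
    simpa [mem_window_last_iff] using agree.notMem_of_pos_eq planar_last
      (castAdd_mem_window (u q)) (natAdd_mem_window (by lia) (w q)) (huw q)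
  let x (q : Fin 3) : Fin (ω + r) := ⟨u q + r + 2, by have := u_lt q; lia⟩
  have x_range (q) : r + 2 ≤ (x q).val ∧ (x q).val < 2 * r + 2 := by have := u_lt q; simp [x]; lia
  obtain ⟨q, hq⟩ := agree.exists_pos_notMem_image planar_first planar_last
    (s := ⟨r, by lia⟩) (t := ⟨r + 1, by lia⟩) (x := x) (y := fun q => Fin.castAdd r (u q))
    (C := {v | ω ≤ v.val}) (by simp) (mem_both le_rfl (by simp; lia))
    (mem_both (by simp) (by simp; lia)) (fun q q' h => hu (Fin.ext (by simpa [x] using h)))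
    (fun q => mem_both (by have := x_range q; lia) (by have := x_range q; lia))
    (fun q => ⟨castAdd_mem_window _,
      fun h => by simpa using (mem_window_last_iff.1 h).trans_lt (u_lt q)⟩)
    (fun q => Or.inl (Or.inl ⟨Or.inl rfl, x_range q⟩))
    (fun q => Or.inl (Or.inl ⟨Or.inr rfl, x_range q⟩))
    (fun q => Or.inl (Or.inr (Or.inl ⟨u_lt q, rfl⟩)))
    (fun v hv => ⟨mem_window_last_iff.2 (by simp at hv; lia),
      fun h => hv.not_gt (mem_window_self_iff.1 h)⟩)
    preconnected_induce_path_storyGraph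
  exact hq ⟨Fin.natAdd ω (w q), by simp, (huw q).symm⟩

end LowerBound

section StraightLine

variable {n ω k : ℕ} {G : SimpleGraph (Fin n)} {S : Set (Fin n)} {P : Set Pt} {p : Fin n → Pt}

/-- The straight-line drawing with vertex positions `p`. -/
noncomputable def straightLine (p : Fin n → Pt) : RawDrawing n where
  pos := p
  curve u v := AffineMap.lineMap (p u) (p v)

theorem arcInterior_straightLine (u v : Fin n) :
    arcInterior ((straightLine p).curve u v) = openSegment ℝ (p u) (p v) :=
  (openSegment_eq_image_lineMap ℝ (p u) (p v)).symm

theorem isPlanarDrawingOn_straightLine {R : Fin n → Fin n → Prop}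
    (hR : ∀ u v, G.Adj u v → R u v ∨ R v u) (hP : ∀ v ∈ S, p v ∈ P) (hp : InjOn p S)
    (hoff : ∀ u ∈ S, ∀ v ∈ S, R u v → ∀ w ∈ S, p w ∉ openSegment ℝ (p u) (p v))
    (hcross : ∀ u ∈ S, ∀ v ∈ S, ∀ x ∈ S, ∀ y ∈ S, R u v → R x y →
      ∀ q ∈ openSegment ℝ (p u) (p v), q ∈ openSegment ℝ (p x) (p y) → u = x ∧ v = y) :
    IsPlanarDrawingOn n G S P (straightLine p) where
  pos_mem := hP
  pos_inj := hp
  curve_symm u v := funext fun t => (AffineMap.lineMap_apply_one_sub (p u) (p v) t).symm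
  arc u hu v hv huv := ⟨AffineMap.lineMap_continuous.continuousOn,
    (AffineMap.lineMap_injective ℝ (hp.ne hu hv huv.ne)).injOn,
    AffineMap.lineMap_apply_zero _ _, AffineMap.lineMap_apply_one _ _⟩
  vertex_off_arc u hu v hv huv w hw := by
    rw [arcInterior_straightLine]
    rcases hR u v huv with h | h
    · exact hoff u hu v hv h w hw
    · exact openSegment_symm ℝ (p v) (p u) ▸ hoff v hv u hu h w hw
  no_cross u hu v hv x hx y hy huv hxy hne := by
    rw [arcInterior_straightLine, arcInterior_straightLine]
    refine eq_empty_iff_forall_notMem.2 fun q ⟨hq, hq'⟩ => hne (Sym2.eq_iff.2 ?_)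
    rcases hR u v huv with h | h <;> rcases hR x y hxy with h' | h'
    · exact Or.inl (hcross u hu v hv x hx y hy h h' q hq hq')
    · rw [openSegment_symm] at hq'
      exact Or.inr (hcross u hu v hv y hy x hx h h' q hq hq')
    · rw [openSegment_symm] at hq
      exact Or.inr (hcross v hv u hu x hx y hy h h' q hq hq').symm
    · rw [openSegment_symm] at hq hq'
      exact Or.inl (hcross v hv u hu y hy x hx h h' q hq hq').symm

theorem realizable_of_forall_window {D : RawDrawing n}
    (hD : ∀ i, IsPlanarDrawingOn n G (window n ω i) (range D.pos) D)
    (hcard : (Finset.univ.image D.pos).card ≤ ω + k) : Realizable n ω k G := by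
  obtain ⟨P, hDP, hP⟩ := Infinite.exists_superset_card_eq _ _ hcard
  refine ⟨P, hP, ⟨{
    Γ := fun _ => D
    planar := fun i _ _ => { hD i with
      pos_mem := fun v _ => hDP (Finset.mem_image_of_mem _ (Finset.mem_univ v)) }
    pos_eq := fun _ _ _ _ _ => rfl
    curve_eq := fun _ _ _ _ _ _ _ _ => rfl }⟩⟩

end StraightLine

section UpperBound

/-- The abscissa of a vertex of `storyGraph r ω` in the drawing that realizes its story. The path
occupies `[0, r - 1]`; the leaves `y_0` and `y_1` share their points with the ends of the path. -/
def abscissa (r ω v : ℕ) : ℤ :=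
  if v = 0 then 0
  else if v < r then r + 2 * v - 3
  else if v < r + 2 then 0
  else if v = r + 2 then -1
  else if v < 2 * r + 2 then 2 * v - r - 6
  else if v < ω then 2 * r - v
  else v - ω

/-- The ordinate of a vertex of `storyGraph r ω` in the drawing that realizes its story: only the
poles lie off the horizontal axis. -/
def ordinate (r v : ℕ) : ℤ :=
  if v = r then 1 else if v = r + 1 then -1 else 0

/-- The positions of the vertices of `storyGraph r ω` in the drawing that realizes its story. -/
def position (r ω : ℕ) (v : Fin (ω + r)) : Pt :=
  (abscissa r ω v, ordinate r v)

variable {r ω u v u' v' : ℕ}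

theorem ordinate_eq_zero (hv : v < r ∨ r + 2 ≤ v) : ordinate r v = 0 := by
  unfold ordinate; grind

theorem ordinate_pole (hu : u = r ∨ u = r + 1) : ordinate r u = 1 ∨ ordinate r u = -1 := by
  unfold ordinate; grind

theorem abscissa_pole (hu : u = r ∨ u = r + 1) : abscissa r ω u = 0 := by
  unfold abscissa; grind

theorem abscissa_eq_or_of_arc (hr : 2 ≤ r) (hω : 2 * r + 2 ≤ ω) (h : Arc r ω u v)
    (hu : u < r ∨ ω ≤ u) :
    abscissa r ω v = abscissa r ω u + 1 ∨ abscissa r ω u = abscissa r ω v + 1 := by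
  unfold Arc at h
  unfold abscissa
  grind (splits := 40)

theorem eq_of_abscissa_eq (hv : r + 2 ≤ v) (hvω : v < 2 * r + 2)
    (hv' : r + 2 ≤ v') (hvω' : v' < 2 * r + 2) (h : abscissa r ω v = abscissa r ω v') :
    v = v' := by
  unfold abscissa at h
  grind (splits := 40)

theorem min_abscissa_of_arc (hω : 2 * r + 2 ≤ ω) (h : Arc r ω u v) (hv : v < ω + r)
    (hu : u < r ∨ ω ≤ u) : min (abscissa r ω u) (abscissa r ω v) =
      if u = 0 then (-1 : ℤ) else if u < r then (r + 2 * u - 3 : ℤ) else (u - ω : ℤ) := by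
  unfold Arc at h
  unfold abscissa
  grind (splits := 40)

theorem eq_of_min_abscissa_eq (hω : 2 * r + 2 ≤ ω) (h : Arc r ω u v)
    (h' : Arc r ω u' v') (hv : v < ω + r) (hv' : v' < ω + r) (hu : u < r ∨ ω ≤ u)
    (hu' : u' < r ∨ ω ≤ u')
    (hmin : min (abscissa r ω u) (abscissa r ω v) = min (abscissa r ω u') (abscissa r ω v')) :
    u = u' ∧ v = v' := by
  rw [min_abscissa_of_arc hω h hv hu, min_abscissa_of_arc hω h' hv' hu'] at hmin
  unfold Arc at h h'
  grind (splits := 40)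

theorem injOn_position_window (hr : 2 ≤ r) (i : ℕ) :
    InjOn (position r ω) (window (ω + r) ω i) := by
  rintro u ⟨hu, hu'⟩ v ⟨hv, hv'⟩ h
  simp only [position, Prod.mk.injEq, Int.cast_inj, abscissa, ordinate] at h
  grind (splits := 40)

theorem mem_openSegment_of_pole {u v : Fin (ω + r)} (hu : u.val = r ∨ u.val = r + 1)
    (hv : r + 2 ≤ v.val) {q : Pt} (hq : q ∈ openSegment ℝ (position r ω u) (position r ω v)) :
    0 < ordinate r u * q.2 ∧ ordinate r u * q.2 < 1 ∧
      q.1 = (1 - ordinate r u * q.2) * abscissa r ω v := by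
  obtain ⟨a, b, ha, hb, hab, rfl⟩ := hq
  have hsq : (ordinate r u * ordinate r u : ℝ) = 1 := by
    exact_mod_cast mul_self_eq_one_iff.2 (ordinate_pole hu)
  have hproj : ordinate r u * (a • position r ω u + b • position r ω v).2 = a := by
    simp only [position, Prod.snd_add, Prod.smul_snd, smul_eq_mul, ordinate_eq_zero (.inr hv),
      Int.cast_zero, mul_zero, add_zero]
    rw [mul_left_comm, hsq, mul_one]
  rw [hproj]
  refine ⟨ha, by linarith, ?_⟩
  simp only [position, Prod.fst_add, Prod.smul_fst, smul_eq_mul, abscissa_pole hu, Int.cast_zero,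
    mul_zero, zero_add]
  rw [← hab, add_sub_cancel_left]

theorem mem_openSegment_of_axis (hr : 2 ≤ r) (hω : 2 * r + 2 ≤ ω) {u v : Fin (ω + r)}
    (h : Arc r ω u v) (hu : u.val < r ∨ ω ≤ u.val) {q : Pt}
    (hq : q ∈ openSegment ℝ (position r ω u) (position r ω v)) :
    q.2 = 0 ∧ (min (abscissa r ω u) (abscissa r ω v) : ℤ) < q.1 ∧
      q.1 < (min (abscissa r ω u) (abscissa r ω v) : ℤ) + 1 := by
  obtain ⟨a, b, ha, hb, hab, rfl⟩ := hq
  simp only [position, Prod.fst_add, Prod.snd_add, Prod.smul_fst, Prod.smul_snd, smul_eq_mul]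
  rw [ordinate_eq_zero (hu.imp_right (by lia)), ordinate_eq_zero (by unfold Arc at h; lia)]
  refine ⟨by simp, ?_⟩
  obtain rfl := eq_sub_of_add_eq hab
  rcases abscissa_eq_or_of_arc hr hω h hu with h | h
  · rw [min_eq_left (by lia), h, Int.cast_add, Int.cast_one]
    constructor <;> linarith
  · rw [min_eq_right (by lia), h, Int.cast_add, Int.cast_one]
    constructor <;> linarith

theorem Arc.pole_or_axis (h : Arc r ω u v) :
    ((u = r ∨ u = r + 1) ∧ r + 2 ≤ v ∧ v < 2 * r + 2) ∨ u < r ∨ ω ≤ u :=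
  h.imp_right (Or.imp And.left And.left)

theorem position_notMem_openSegment (hr : 2 ≤ r) (hω : 2 * r + 2 ≤ ω) {u v : Fin (ω + r)}
    (h : Arc r ω u v) (w : Fin (ω + r)) :
    position r ω w ∉ openSegment ℝ (position r ω u) (position r ω v) := fun hw => by
  rcases h.pole_or_axis with ⟨hu, hv, -⟩ | hu
  · obtain ⟨hpos, hlt, -⟩ := mem_openSegment_of_pole hu hv hw
    simp only [position] at hpos hlt
    norm_cast at hpos hlt
    lia
  · obtain ⟨-, hlt, hlt'⟩ := mem_openSegment_of_axis hr hω h hu hw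
    simp only [position] at hlt hlt'
    norm_cast at hlt hlt'
    lia

theorem eq_of_mem_openSegment_of_pole {u v x y : Fin (ω + r)} (hu : u.val = r ∨ u.val = r + 1)
    (hv : r + 2 ≤ v.val) (hv' : v.val < 2 * r + 2) (hx : x.val = r ∨ x.val = r + 1)
    (hy : r + 2 ≤ y.val) (hy' : y.val < 2 * r + 2) {q : Pt}
    (hq : q ∈ openSegment ℝ (position r ω u) (position r ω v))
    (hq' : q ∈ openSegment ℝ (position r ω x) (position r ω y)) : u = x ∧ v = y := by
  obtain ⟨hpos, hlt, hqv⟩ := mem_openSegment_of_pole hu hv hq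
  obtain ⟨hpos', hlt', hqy⟩ := mem_openSegment_of_pole hx hy hq'
  have hux : u.val = x.val := by
    by_contra hne
    have : (ordinate r u : ℝ) = -ordinate r x := by
      exact_mod_cast (by unfold ordinate; grind : ordinate r u = -ordinate r x)
    rw [this] at hpos
    linarith
  rw [← hux] at hqy
  have := mul_left_cancel₀ (sub_pos.2 hlt).ne' (hqv.symm.trans hqy)
  exact ⟨Fin.ext hux, Fin.ext (eq_of_abscissa_eq hv hv' hy hy' (Int.cast_injective this))⟩

theorem eq_of_mem_openSegment_of_axis (hr : 2 ≤ r) (hω : 2 * r + 2 ≤ ω)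
    {u v x y : Fin (ω + r)} (h : Arc r ω u v) (h' : Arc r ω x y) (hu : u.val < r ∨ ω ≤ u.val)
    (hx : x.val < r ∨ ω ≤ x.val) {q : Pt}
    (hq : q ∈ openSegment ℝ (position r ω u) (position r ω v))
    (hq' : q ∈ openSegment ℝ (position r ω x) (position r ω y)) : u = x ∧ v = y := by
  obtain ⟨-, hlt, hlt'⟩ := mem_openSegment_of_axis hr hω h hu hq
  obtain ⟨-, hlt₂, hlt₂'⟩ := mem_openSegment_of_axis hr hω h' hx hq'
  have := Int.lt_add_one_iff.1 (by exact_mod_cast hlt.trans hlt₂')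
  have := Int.lt_add_one_iff.1 (by exact_mod_cast hlt₂.trans hlt')
  have := eq_of_min_abscissa_eq hω h h' v.2 y.2 hu hx (by lia)
  exact ⟨Fin.ext this.1, Fin.ext this.2⟩

theorem eq_of_mem_openSegment (hr : 2 ≤ r) (hω : 2 * r + 2 ≤ ω) {u v x y : Fin (ω + r)}
    (h : Arc r ω u v) (h' : Arc r ω x y) {q : Pt}
    (hq : q ∈ openSegment ℝ (position r ω u) (position r ω v))
    (hq' : q ∈ openSegment ℝ (position r ω x) (position r ω y)) : u = x ∧ v = y := by
  rcases h.pole_or_axis with ⟨hu, hv, hv'⟩ | hu <;>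
    rcases h'.pole_or_axis with ⟨hx, hy, hy'⟩ | hx
  · exact eq_of_mem_openSegment_of_pole hu hv hv' hx hy hy' hq hq'
  · have := (mem_openSegment_of_pole hu hv hq).1
    simp [(mem_openSegment_of_axis hr hω h' hx hq').1] at this
  · have := (mem_openSegment_of_pole hx hy hq').1
    simp [(mem_openSegment_of_axis hr hω h hu hq).1] at this
  · exact eq_of_mem_openSegment_of_axis hr hω h h' hu hx hq hq'

theorem card_image_position_le (hr : 2 ≤ r) (hω : 2 * r + 2 ≤ ω) :
    (Finset.univ.image (position r ω)).card ≤ ω + (r - 2) := by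
  let T : Finset (Fin (ω + r)) := {⟨ω, by lia⟩, ⟨ω + r - 1, by lia⟩}
  have hT : T.card = 2 := Finset.card_pair (by simp; lia)
  have image_subset : Finset.univ.image (position r ω) ⊆ Tᶜ.image (position r ω) := by
    refine Finset.image_subset_iff.2 fun v _ => ?_
    by_cases hv : v ∈ T
    · rw [Finset.mem_insert, Finset.mem_singleton] at hv
      rcases hv with rfl | rfl
      · refine Finset.mem_image.2 ⟨⟨0, by lia⟩, by simp [T, Fin.ext_iff]; lia, ?_⟩
        simp only [position, Prod.mk.injEq, Int.cast_inj, abscissa, ordinate]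
        grind (splits := 20)
      · refine Finset.mem_image.2 ⟨⟨1, by lia⟩, by simp [T, Fin.ext_iff]; lia, ?_⟩
        simp only [position, Prod.mk.injEq, Int.cast_inj, abscissa, ordinate]
        grind (splits := 20)
    · exact Finset.mem_image_of_mem _ (Finset.mem_compl.2 hv)
  refine (Finset.card_le_card image_subset).trans (Finset.card_image_le.trans ?_)
  rw [Finset.card_compl, Fintype.card_fin, hT]
  lia

theorem realizable_storyGraph {k : ℕ} (hr : 2 ≤ r) (hω : 2 * r + 2 ≤ ω) (hk : r ≤ k + 2) :
    Realizable (ω + r) ω k (storyGraph r ω) :=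
  realizable_of_forall_window (D := straightLine (position r ω))
    (fun i => isPlanarDrawingOn_straightLine (R := fun u v => Arc r ω u v) (fun _ _ => id)
      (fun v _ => mem_range_self v) (injOn_position_window hr i)
      (fun _ _ _ _ h w _ => position_notMem_openSegment hr hω h w)
      (fun _ _ _ _ _ _ _ _ h h' _ => eq_of_mem_openSegment hr hω h h'))
    ((card_image_position_le hr hω).trans (by lia))

end UpperBound

theorem realizable_storyGraph_iff {r ω k : ℕ} (hr : 2 ≤ r) (hω : 2 * r + 2 ≤ ω) :
    Realizable (ω + r) ω k (storyGraph r ω) ↔ r ≤ k + 2 :=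
  ⟨le_add_two_of_realizable_storyGraph hω, realizable_storyGraph hr hω⟩

theorem series_parallel_extra_points_lower_bound_general (ω m : ℕ) (hω : 2 * m + 6 ≤ ω) :
    ∃ (n : ℕ) (G : SimpleGraph (Fin n)),
      ω ≤ n ∧ Visible n ω G ∧ SeriesParallel G ∧ ∀ k : ℕ, Realizable n ω k G ↔ m ≤ k :=
  ⟨ω + (m + 2), storyGraph (m + 2) ω, by lia, visible_storyGraph (by lia),
    seriesParallel_storyGraph (by lia) (by lia), fun _ =>
      (realizable_storyGraph_iff (by lia) (by lia)).trans (Nat.add_le_add_iff_right)⟩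

/-- **Theorem 9.** For every `ω ≥ 8` there exists a graph story
`S = (G, ω, k, τ)` such that `G` is a series-parallel graph and `S` is not
realizable for any `k < ⌊ω/2⌋ - 3`, while it is realizable for
`k = ⌊ω/2⌋ - 3`. -/
theorem series_parallel_extra_points_lower_bound
    (ω : ℕ) (hω : 8 ≤ ω) :
    ∃ (n : ℕ) (G : SimpleGraph (Fin n)),
      ω ≤ n ∧ Visible n ω G ∧ SeriesParallel G ∧
      (∀ k : ℕ, k < ω / 2 - 3 → ¬ Realizable n ω k G) ∧
      Realizable n ω (ω / 2 - 3) G := by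
  obtain ⟨n, G, hn, hvis, hsp, hreal⟩ :=
    series_parallel_extra_points_lower_bound_general ω (ω / 2 - 3) (by lia)
  exact ⟨n, G, hn, hvis, hsp, fun k hk h => hk.not_ge ((hreal k).1 h), (hreal _).2 le_rfl⟩

end GraphStories
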